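/- Let X be a Tychonoff separably λ-submetrizable space and let λ, μ ∈ Ψ with μ ⊆ λ. Then X has property S_fin(Λ(λ), Λ(μ)) if and only if the bitopological space (C(X), τ_μ, τ_λ) is M_{(τ_λ,τ_μ)}-separable. -/

import Mathlib

open Set Filter Topology TopologicalSpace ContinuousMap

/-- A subset `A` of `X` is *C-compact* if `f '' A` is compact in `ℝ` for every
continuous real-valued function `f` on `X`. -/
def IsCCompact {X : Type*} [TopologicalSpace X] (A : Set X) : Prop :=
  ∀ f : C(X, ℝ), IsCompact (f '' A)

/-- The `λ`-open (set-open) topology on `C(X, ℝ)`, generated by the subbasic sets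
`[F, U] = {f : f '' F ⊆ U}` for `F ∈ lam` and `U ⊆ ℝ` open. -/
def setOpenTopology {X : Type*} [TopologicalSpace X] (lam : Set (Set X)) :
    TopologicalSpace C(X, ℝ) :=
  TopologicalSpace.generateFrom
    {S | ∃ F ∈ lam, ∃ U : Set ℝ, IsOpen U ∧ S = {f : C(X, ℝ) | f '' F ⊆ U}}

/-- Membership in the collection `Ψ`: a family of nonempty closed C-compact subsets of `X`
forming a π-network, hereditary with respect to (closed) C-compact subsets of its elements,
and maximal among families of nonempty sets inducing the same set-open topology. -/
structure MemPsi {X : Type*} [TopologicalSpace X] (lam : Set (Set X)) : Prop where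
  nonempty : ∀ A ∈ lam, A.Nonempty
  closed : ∀ A ∈ lam, IsClosed A
  ccompact : ∀ A ∈ lam, IsCCompact A
  piNetwork : ∀ U : Set X, IsOpen U → U.Nonempty → ∃ A ∈ lam, A ⊆ U
  hereditary : ∀ A ∈ lam, ∀ B : Set X, B ⊆ A → B.Nonempty → IsClosed B → IsCCompact B →
    B ∈ lam
  maximal : ∀ lam' : Set (Set X), (∀ A ∈ lam', A.Nonempty) →
    setOpenTopology lam' = setOpenTopology lam → lam' ⊆ lam

/-- A cozero (functional open) subset of `X`: the complement of a zero-set. -/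
def IsCozero {X : Type*} [TopologicalSpace X] (U : Set X) : Prop :=
  ∃ f : C(X, ℝ), U = {x | f x ≠ 0}

/-- `𝒰` is a `λ`-f-cover: a family of cozero sets, not containing `X`, such that every
member of `lam` is contained in some member of `𝒰`. -/
def IsFCover {X : Type*} [TopologicalSpace X] (lam : Set (Set X)) (𝒰 : Set (Set X)) : Prop :=
  (Set.univ : Set X) ∉ 𝒰 ∧ (∀ U ∈ 𝒰, IsCozero U) ∧ ∀ A ∈ lam, ∃ U ∈ 𝒰, A ⊆ U

/-- `Λ(λ)`: the collection of all `λ`-f-covers of `X`. -/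
def fCovers {X : Type*} [TopologicalSpace X] (lam : Set (Set X)) : Set (Set (Set X)) :=
  {𝒰 | IsFCover lam 𝒰}

/-- The selection principle `S₁(𝒜, ℬ)`. -/
def S1 {α : Type*} (𝒜 ℬ : Set (Set α)) : Prop :=
  ∀ A : ℕ → Set α, (∀ n, A n ∈ 𝒜) →
    ∃ b : ℕ → α, (∀ n, b n ∈ A n) ∧ Set.range b ∈ ℬ

/-- The selection principle `S_fin(𝒜, ℬ)`. -/
def Sfin {α : Type*} (𝒜 ℬ : Set (Set α)) : Prop :=
  ∀ A : ℕ → Set α, (∀ n, A n ∈ 𝒜) →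
    ∃ B : ℕ → Set α, (∀ n, (B n).Finite ∧ B n ⊆ A n) ∧ (⋃ n, B n) ∈ ℬ

/-- `Ω_y` with respect to the topology `t`: sets having `y` in their closure but not
containing `y`. -/
def OmegaPt {Y : Type*} (t : TopologicalSpace Y) (y : Y) : Set (Set Y) :=
  {A | y ∈ @closure Y t A ∧ y ∉ A}

/-- Countable `(t₁, t₂)`-tightness of a bitopological space. -/
def CountableBiTightness {Y : Type*} (t1 t2 : TopologicalSpace Y) : Prop :=
  ∀ A : Set Y, ∀ f ∈ @closure Y t1 A, ∃ B ⊆ A, B.Countable ∧ f ∈ @closure Y t2 B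

/-- `X` is `λ`-`μ`-Lindelöf: every `λ`-f-cover has a countable subfamily which is a
`μ`-f-cover. -/
def LamMuLindelof {X : Type*} [TopologicalSpace X] (lam mu : Set (Set X)) : Prop :=
  ∀ 𝒰 : Set (Set X), IsFCover lam 𝒰 → ∃ 𝒱 ⊆ 𝒰, 𝒱.Countable ∧ IsFCover mu 𝒱

/-- Countable `(t₁, t₂)`-T-tightness: for every uncountable regular cardinal `κ` and every
increasing `κ`-indexed sequence of `t₁`-closed sets, the union is `t₂`-closed. -/
def CountableBiTTightness {Y : Type*} (t1 t2 : TopologicalSpace Y) : Prop :=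
  ∀ κ : Cardinal.{0}, Cardinal.aleph0 < κ → κ.IsRegular →
    ∀ A : κ.ord.ToType → Set Y, Monotone A → (∀ α, @IsClosed Y t1 (A α)) →
      @IsClosed Y t2 (⋃ α, A α)

/-- `X` is separably `λ`-submetrizable: there is a continuous map of `X` onto a separable
metric space which is one-to-one on `⋃ lam`. -/
def SeparablyLamSubmetrizable (X : Type*) [TopologicalSpace X] (lam : Set (Set X)) : Prop :=
  ∃ (Y : Type) (m : MetricSpace Y),
    @SeparableSpace Y m.toPseudoMetricSpace.toUniformSpace.toTopologicalSpace ∧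
    ∃ f : X → Y,
      @Continuous X Y _ m.toPseudoMetricSpace.toUniformSpace.toTopologicalSpace f ∧
      Function.Surjective f ∧ Set.InjOn f (⋃₀ lam)

/-- `R`-separability for a pair of topologies: from every sequence of `t₁`-dense sets one
can pick single points forming a `t₂`-dense set. -/
def RSepBi {Y : Type*} (t1 t2 : TopologicalSpace Y) : Prop :=
  ∀ D : ℕ → Set Y, (∀ n, @Dense Y t1 (D n)) →
    ∃ d : ℕ → Y, (∀ n, d n ∈ D n) ∧ @Dense Y t2 (Set.range d)

/-- `M`-separability for a pair of topologies. -/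
def MSepBi {Y : Type*} (t1 t2 : TopologicalSpace Y) : Prop :=
  ∀ D : ℕ → Set Y, (∀ n, @Dense Y t1 (D n)) →
    ∃ F : ℕ → Set Y, (∀ n, (F n).Finite ∧ F n ⊆ D n) ∧ @Dense Y t2 (⋃ n, F n)

/-- `H`-separability for a pair of topologies. -/
def HSepBi {Y : Type*} (t1 t2 : TopologicalSpace Y) : Prop :=
  ∀ D : ℕ → Set Y, (∀ n, @Dense Y t1 (D n)) →
    ∃ F : ℕ → Set Y, (∀ n, (F n).Finite ∧ F n ⊆ D n) ∧
      ∀ G : Set Y, @IsOpen Y t2 G → G.Nonempty →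
        ∀ᶠ n in Filter.atTop, (G ∩ F n).Nonempty

/-- A countable set `D` is groupable with respect to the topology `t`. -/
def GroupableIn {Y : Type*} (t : TopologicalSpace Y) (D : Set Y) : Prop :=
  ∃ A : ℕ → Set Y, (∀ n, (A n).Finite) ∧ D = ⋃ n, A n ∧
    ∀ G : Set Y, @IsOpen Y t G → G.Nonempty →
      ∀ᶠ n in Filter.atTop, (G ∩ A n).Nonempty

/-- `GN`-separability for a pair of topologies. -/
def GNSepBi {Y : Type*} (t1 t2 : TopologicalSpace Y) : Prop :=
  ∀ D : ℕ → Set Y, (∀ n, @Dense Y t1 (D n)) →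
    ∃ d : ℕ → Y, (∀ n, d n ∈ D n) ∧ @Dense Y t2 (Set.range d) ∧
      GroupableIn t2 (Set.range d)

/-- The `(t₁, t₂)`-Pytkeev property for a bitopological space. -/
def PytkeevBi {Y : Type*} (t1 t2 : TopologicalSpace Y) : Prop :=
  ∀ A : Set Y, ∀ g ∈ @closure Y t1 A, g ∉ A →
    ∃ B : ℕ → Set Y, (∀ n, (B n).Infinite ∧ B n ⊆ A) ∧
      ∀ G ∈ @nhds Y t2 g, ∃ n, B n ⊆ G

/-- A groupable `μ`-f-cover. -/
def GroupableFCover {X : Type*} [TopologicalSpace X] (mu 𝒱 : Set (Set X)) : Prop :=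
  𝒱.Countable ∧ IsFCover mu 𝒱 ∧
    ∃ G : ℕ → Set (Set X), (∀ m, (G m).Finite) ∧
      (Pairwise fun m k => Disjoint (G m) (G k)) ∧ 𝒱 = ⋃ m, G m ∧
      ∀ F ∈ mu, ∀ᶠ m in Filter.atTop, ∃ U ∈ G m, F ⊆ U

/-!
On a C-compact set `K` a continuous function into a proper metric space behaves as if `K` were
compact: its image is compact. Cutting `K ∈ λ` into pieces `K ∩ f⁻¹(I)` with `I` a short interval
then shows that `τ_λ` is the topology of uniform convergence on the members of `λ`.

Both implications become statements about uniform approximation on members of `λ` and `μ`.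
From covers to functions, `{x | |h x - g x| < ε}` for `h` in a `τ_λ`-dense set is a `λ`-f-cover, and
it suffices to approximate countably many `g` because `C_μ(X)` is separable. From functions to
covers, the functions equal to `1` off some member of a `λ`-f-cover are `τ_λ`-dense, and one of
them that is within distance `1` of `0` on `K` pins down a member of the cover containing `K`.
Separability of `C_μ(X)` comes from a map into the Hilbert cube that is injective on `⋃ μ`: every
continuous function factors through it on each member of `μ`.
-/

section

variable {X : Type*} [TopologicalSpace X] {lam mu : Set (Set X)} {K : Set X}

namespace IsCCompact

theorem isCompact_image {M : Type*} [MetricSpace M] [ProperSpace M] (hK : IsCCompact K)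
    (φ : C(X, M)) : IsCompact (φ '' K) := by
  have image_dist (q : M) : IsCompact ((fun x => dist (φ x) q) '' K) :=
    hK ⟨fun x => dist (φ x) q, by fun_prop⟩
  refine Metric.isCompact_of_isClosed_isBounded (isClosed_of_closure_subset fun q hq => ?_) ?_
  · have hzero : (0 : ℝ) ∈ closure ((fun x => dist (φ x) q) '' K) := by
      have := image_closure_subset_closure_image (s := φ '' K)
        (f := fun y => dist y q) (by fun_prop) (mem_image_of_mem _ hq)
      simpa only [dist_self, image_image] using this
    rw [(image_dist q).isClosed.closure_eq] at hzero
    obtain ⟨x, hx, hxq⟩ := hzero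
    exact ⟨x, hx, dist_eq_zero.mp hxq⟩
  · rcases K.eq_empty_or_nonempty with rfl | ⟨a, -⟩
    · simp
    obtain ⟨r, hr⟩ := (image_dist (φ a)).bddAbove
    refine Metric.isBounded_closedBall.subset (?_ : _ ⊆ Metric.closedBall (φ a) r)
    rintro _ ⟨x, hx, rfl⟩
    exact hr ⟨x, hx, rfl⟩

theorem inter_preimage {M : Type*} [MetricSpace M] [ProperSpace M] (hK : IsCCompact K)
    (φ : C(X, M)) {C : Set M} (hC : IsClosed C) : IsCCompact (K ∩ φ ⁻¹' C) := by
  intro f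
  have image_eq : f '' (K ∩ φ ⁻¹' C) = Prod.fst '' ((f.prodMk φ) '' K ∩ Prod.snd ⁻¹' C) := by
    rw [← image_inter_preimage, image_image]
    rfl
  rw [image_eq]
  exact ((hK.isCompact_image (f.prodMk φ)).inter_right
    (hC.preimage continuous_snd)).image continuous_fst

/-- The graph of the factorization, the image of `K` under `(e, f)`, is compact; hence the
factorization is continuous on `e K` and extends by Tietze. -/
theorem exists_eqOn_comp {Q : Type*} [MetricSpace Q] [ProperSpace Q] (hK : IsCCompact K)
    {e : C(X, Q)} (he : InjOn e K) (f : C(X, ℝ)) : ∃ F : C(Q, ℝ), EqOn (F.comp e) f K := by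
  let graph : Set (Q × ℝ) := (e.prodMk f) '' K
  have : CompactSpace graph := isCompact_iff_compactSpace.mp (hK.isCompact_image (e.prodMk f))
  have fst_injective : Function.Injective fun z : graph => z.1.1 := by
    rintro ⟨_, x, hx, rfl⟩ ⟨_, y, hy, rfl⟩ hxy
    obtain rfl : x = y := he hx hy hxy
    rfl
  have fst_embedding : IsClosedEmbedding fun z : graph => z.1.1 :=
    Continuous.isClosedEmbedding (by fun_prop) fst_injective
  obtain ⟨F, hF⟩ := ContinuousMap.exists_extension' fst_embedding
    (⟨fun z => z.1.2, by fun_prop⟩ : C(graph, ℝ))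
  exact ⟨F, fun x hx => congrFun hF ⟨_, x, hx, rfl⟩⟩

theorem exists_eqOn_one_eqOn_zero (hK : IsCCompact K) {U : Set X} (hU : IsCozero U)
    (hKU : K ⊆ U) : ∃ p : C(X, ℝ), EqOn p 1 K ∧ EqOn p 0 Uᶜ := by
  obtain ⟨g, rfl⟩ := hU
  have zero_notMem : (0 : ℝ) ∉ g '' K := by
    rintro ⟨x, hx, hgx⟩
    exact hKU hx hgx
  obtain ⟨u, hu0, hu1, -⟩ := exists_continuous_zero_one_of_isClosed isClosed_singleton
    (hK g).isClosed (disjoint_singleton_left.mpr zero_notMem)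
  refine ⟨u.comp g, fun x hx => hu1 ⟨x, hx, rfl⟩, fun x hx => hu0 ?_⟩
  simpa using hx

end IsCCompact

theorem isOpen_setOf_image_subset {F : Set X} (hF : F ∈ lam) {U : Set ℝ} (hU : IsOpen U) :
    IsOpen[setOpenTopology lam] {f : C(X, ℝ) | f '' F ⊆ U} :=
  isOpen_generateFrom_of_mem ⟨F, hF, U, hU, rfl⟩

theorem setOpenTopology_insert_union {A B : Set X} (hA : A ∈ lam) (hB : B ∈ lam) :
    setOpenTopology (insert (A ∪ B) lam) = setOpenTopology lam := by
  apply le_antisymm <;> apply le_generateFrom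
  · rintro _ ⟨F, hF, U, hU, rfl⟩
    exact isOpen_setOf_image_subset (mem_insert_of_mem _ hF) hU
  · rintro _ ⟨F, rfl | hF, U, hU, rfl⟩
    · simp only [image_union, union_subset_iff, ofPred_and]
      exact @IsOpen.inter _ (setOpenTopology lam) _ _ (isOpen_setOf_image_subset hA hU)
        (isOpen_setOf_image_subset hB hU)
    · exact isOpen_setOf_image_subset hF hU

/-- The functions that are pointwise within `ε` of `f` on `K`: for `K ∈ λ` and `ε > 0`, the basic
neighbourhoods of `f` in the topology of uniform convergence on the members of `λ`. The strict
inequality at each point, rather than on the supremum, avoids the supremum of an empty set. -/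
def uniformBall (K : Set X) (f : C(X, ℝ)) (ε : ℝ) : Set C(X, ℝ) :=
  {g | ∀ x ∈ K, dist (g x) (f x) < ε}

namespace MemPsi

theorem family_nonempty [Nonempty X] (h : MemPsi lam) : lam.Nonempty :=
  let ⟨A, hA, _⟩ := h.piNetwork univ isOpen_univ univ_nonempty
  ⟨A, hA⟩

theorem union_mem (h : MemPsi lam) {A B : Set X} (hA : A ∈ lam) (hB : B ∈ lam) :
    A ∪ B ∈ lam := by
  refine h.maximal _ ?_ (setOpenTopology_insert_union hA hB) (mem_insert _ _)
  rintro C (rfl | hC)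
  exacts [(h.nonempty A hA).inl, h.nonempty C hC]

theorem inter_preimage_mem (h : MemPsi lam) (hK : K ∈ lam) (f : C(X, ℝ)) {C : Set ℝ}
    (hC : IsClosed C) (hne : (K ∩ f ⁻¹' C).Nonempty) : K ∩ f ⁻¹' C ∈ lam :=
  h.hereditary K hK _ inter_subset_left hne ((h.closed K hK).inter (hC.preimage f.continuous))
    ((h.ccompact K hK).inter_preimage f hC)

theorem uniformBall_mem_nhds (h : MemPsi lam) (hK : K ∈ lam) (f : C(X, ℝ)) {ε : ℝ} (hε : 0 < ε) :
    uniformBall K f ε ∈ @nhds _ (setOpenTopology lam) f := by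
  let _ := setOpenTopology lam
  obtain ⟨t, htK, htfin, hcover⟩ :=
    (h.ccompact K hK f).finite_cover_balls (show 0 < ε / 3 by positivity)
  let piece (r : ℝ) : Set X := K ∩ f ⁻¹' Metric.closedBall r (ε / 3)
  have piece_mem {r : ℝ} (hr : r ∈ t) : piece r ∈ lam := by
    obtain ⟨x, hx, rfl⟩ := htK hr
    exact h.inter_preimage_mem hK f Metric.isClosed_closedBall
      ⟨x, hx, Metric.mem_closedBall_self (by positivity)⟩
  have nhds_piece (r : ℝ) (hr : r ∈ t) :
      {g : C(X, ℝ) | g '' piece r ⊆ Metric.ball r (ε / 2)} ∈ 𝓝 f := by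
    refine (isOpen_setOf_image_subset (piece_mem hr) Metric.isOpen_ball).mem_nhds ?_
    rintro _ ⟨x, hx, rfl⟩
    exact Metric.closedBall_subset_ball (by linarith) hx.2
  filter_upwards [(biInter_mem htfin).mpr nhds_piece] with g hg x hx
  obtain ⟨r, hr, hfx⟩ := mem_iUnion₂.mp (hcover ⟨x, hx, rfl⟩)
  have hgx : dist (g x) r < ε / 2 :=
    mem_iInter₂.mp hg r hr ⟨x, ⟨hx, Metric.ball_subset_closedBall hfx⟩, rfl⟩
  calc dist (g x) (f x) ≤ dist (g x) r + dist (f x) r := dist_triangle_right _ _ _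
    _ < ε / 2 + ε / 3 := add_lt_add hgx hfx
    _ < ε := by linarith

theorem exists_uniformBall_subset [Nonempty X] (h : MemPsi lam) {W : Set C(X, ℝ)}
    (hW : IsOpen[setOpenTopology lam] W) {f : C(X, ℝ)} (hf : f ∈ W) :
    ∃ K ∈ lam, ∃ ε > 0, uniformBall K f ε ⊆ W := by
  change GenerateOpen _ W at hW
  induction hW with
  | basic S hS =>
    obtain ⟨F, hF, U, hU, rfl⟩ := hS
    obtain ⟨δ, hδ, hsub⟩ := (h.ccompact F hF f).exists_thickening_subset_open hU hf
    refine ⟨F, hF, δ, hδ, ?_⟩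
    rintro g hg _ ⟨x, hx, rfl⟩
    exact hsub (Metric.mem_thickening_iff.mpr ⟨f x, ⟨x, hx, rfl⟩, hg x hx⟩)
  | univ =>
    obtain ⟨K, hK⟩ := h.family_nonempty
    exact ⟨K, hK, 1, one_pos, subset_univ _⟩
  | inter S T _ _ ihS ihT =>
    obtain ⟨K, hK, ε, hε, hS⟩ := ihS hf.1
    obtain ⟨L, hL, δ, hδ, hT⟩ := ihT hf.2
    refine ⟨K ∪ L, h.union_mem hK hL, min ε δ, lt_min hε hδ, fun g hg => ⟨hS ?_, hT ?_⟩⟩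
    · exact fun x hx => (hg x (.inl hx)).trans_le (min_le_left _ _)
    · exact fun x hx => (hg x (.inr hx)).trans_le (min_le_right _ _)
  | sUnion 𝒮 _ ih =>
    obtain ⟨S, hS, hfS⟩ := hf
    obtain ⟨K, hK, ε, hε, hsub⟩ := ih S hS hfS
    exact ⟨K, hK, ε, hε, hsub.trans (subset_sUnion_of_mem hS)⟩

theorem hasBasis_nhds [Nonempty X] (h : MemPsi lam) (f : C(X, ℝ)) :
    (@nhds _ (setOpenTopology lam) f).HasBasis (fun i : Set X × ℝ => i.1 ∈ lam ∧ 0 < i.2)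
      fun i => uniformBall i.1 f i.2 := by
  let _ := setOpenTopology lam
  refine ⟨fun W => ⟨fun hW => ?_, fun ⟨i, hi, hsub⟩ => ?_⟩⟩
  · obtain ⟨V, hVW, hV, hfV⟩ := mem_nhds_iff.mp hW
    obtain ⟨K, hK, ε, hε, hsub⟩ := h.exists_uniformBall_subset hV hfV
    exact ⟨(K, ε), ⟨hK, hε⟩, hsub.trans hVW⟩
  · exact mem_of_superset (h.uniformBall_mem_nhds hi.1 f hi.2) hsub

theorem dense_iff [Nonempty X] (h : MemPsi lam) {D : Set C(X, ℝ)} :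
    @Dense _ (setOpenTopology lam) D ↔
      ∀ f, ∀ K ∈ lam, ∀ ε > 0, ∃ g ∈ D, g ∈ uniformBall K f ε := by
  let _ := setOpenTopology lam
  refine forall_congr' fun f => (mem_closure_iff_nhds_basis (h.hasBasis_nhds f)).trans ?_
  exact ⟨fun hD K hK ε hε => hD (K, ε) ⟨hK, hε⟩, fun hD i hi => hD i.1 hi.1 i.2 hi.2⟩

theorem separableSpace_of_injOn [Nonempty X] (h : MemPsi lam) {Q : Type*} [MetricSpace Q]
    [CompactSpace Q] {e : C(X, Q)} (he : InjOn e (⋃₀ lam)) :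
    @SeparableSpace C(X, ℝ) (setOpenTopology lam) := by
  let s (n : ℕ) : C(X, ℝ) := (denseSeq C(Q, ℝ) n).comp e
  refine @SeparableSpace.mk _ (setOpenTopology lam) ⟨range s, countable_range s, ?_⟩
  refine h.dense_iff.mpr fun f K hK ε hε => ?_
  obtain ⟨F, hF⟩ :=
    (h.ccompact K hK).exists_eqOn_comp (he.mono (subset_sUnion_of_mem hK)) f
  obtain ⟨n, hn⟩ := (denseRange_denseSeq C(Q, ℝ)).exists_dist_lt F hε
  refine ⟨s n, mem_range_self n, fun x hx => ?_⟩
  rw [← hF hx, dist_comm]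
  exact (ContinuousMap.dist_apply_le_dist (e x)).trans_lt hn

theorem separableSpace (h : MemPsi lam) (hX : SeparablyLamSubmetrizable X lam) :
    @SeparableSpace C(X, ℝ) (setOpenTopology lam) := by
  let _ := setOpenTopology lam
  cases isEmpty_or_nonempty X
  · infer_instance
  obtain ⟨Y, _, _, f, hf, -, hinj⟩ := hX
  obtain ⟨ι, hι⟩ := Metric.PiNatEmbed.exists_embedding_to_hilbert_cube (X := Y)
  let _ : MetricSpace (ℕ → unitInterval) := metrizableSpaceMetric _
  exact h.separableSpace_of_injOn (e := ⟨ι ∘ f, hι.continuous.comp hf⟩)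
    (hι.injective.comp_injOn hinj)

end MemPsi

theorem SeparablyLamSubmetrizable.mono (hX : SeparablyLamSubmetrizable X lam) (hsub : mu ⊆ lam) :
    SeparablyLamSubmetrizable X mu :=
  let ⟨Y, m, hY, f, hf, hsurj, hinj⟩ := hX
  ⟨Y, m, hY, f, hf, hsurj, hinj.mono (sUnion_subset_sUnion hsub)⟩

theorem isCozero_setOf_dist_lt (f g : C(X, ℝ)) (ε : ℝ) : IsCozero {x | dist (f x) (g x) < ε} :=
  ⟨⟨fun x => max (ε - dist (f x) (g x)) 0, by fun_prop⟩, by ext x; simp⟩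

theorem IsFCover.dense_eqOn_one_compl [Nonempty X] (hlam : MemPsi lam) {𝒰 : Set (Set X)}
    (h𝒰 : IsFCover lam 𝒰) :
    @Dense _ (setOpenTopology lam) {h : C(X, ℝ) | ∃ U ∈ 𝒰, EqOn h 1 Uᶜ} := by
  refine hlam.dense_iff.mpr fun f K hK ε hε => ?_
  obtain ⟨U, hU, hKU⟩ := h𝒰.2.2 K hK
  obtain ⟨p, hpK, hpU⟩ := (hlam.ccompact K hK).exists_eqOn_one_eqOn_zero (h𝒰.2.1 U hU) hKU
  refine ⟨p * f + (1 - p), ⟨U, hU, fun x hx => ?_⟩, fun x hx => ?_⟩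
  · simp [hpU hx]
  · simpa [hpK hx] using hε

theorem MSepBi.sfin_fCovers [Nonempty X] (hlam : MemPsi lam) (hmu : MemPsi mu)
    (hM : MSepBi (setOpenTopology lam) (setOpenTopology mu)) :
    Sfin (fCovers lam) (fCovers mu) := by
  intro 𝒰 h𝒰
  obtain ⟨F, hF, hdense⟩ := hM _ fun n => (h𝒰 n).dense_eqOn_one_compl hlam
  choose! U hU hone using fun n h (hh : h ∈ F n) => (hF n).2 hh
  have hsub (n : ℕ) : U n '' F n ⊆ 𝒰 n := image_subset_iff.mpr (hU n)
  refine ⟨fun n => U n '' F n, fun n => ⟨(hF n).1.image _, hsub n⟩, ?_, ?_, fun K hK => ?_⟩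
  · rw [mem_iUnion]
    rintro ⟨n, hn⟩
    exact (h𝒰 n).1 (hsub n hn)
  · intro V hV
    obtain ⟨n, hn⟩ := mem_iUnion.mp hV
    exact (h𝒰 n).2.1 V (hsub n hn)
  · obtain ⟨h, hh, hlt⟩ := hmu.dense_iff.mp hdense 0 K hK 1 one_pos
    obtain ⟨n, hn⟩ := mem_iUnion.mp hh
    refine ⟨U n h, mem_iUnion.mpr ⟨n, h, hn, rfl⟩, fun x hx => ?_⟩
    by_contra hxU
    simpa [hone n h hn hxU] using hlt x hx

namespace Sfin

theorem of_empty_mem {α : Type*} {𝒜 ℬ : Set (Set α)} (hℬ : ∅ ∈ ℬ) : Sfin 𝒜 ℬ := fun _ _ =>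
  ⟨fun _ => ∅, fun _ => ⟨finite_empty, empty_subset _⟩, by rwa [iUnion_empty]⟩

theorem exists_finite_selection {α : Type*} (hS : Sfin (fCovers lam) (fCovers mu))
    {V : α → Set X} (hV : ∀ a, IsCozero (V a)) {D : ℕ → Set α}
    (hD : ∀ n, ∀ K ∈ lam, ∃ a ∈ D n, K ⊆ V a) :
    ∃ F : ℕ → Set α, (∀ n, (F n).Finite ∧ F n ⊆ D n) ∧ ∀ K ∈ mu, ∃ n, ∃ a ∈ F n, K ⊆ V a := by
  -- An f-cover must not contain `X`, so a `V a` equal to `X` is selected by hand.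
  by_cases hex : ∃ n, ∃ a ∈ D n, V a = univ
  · obtain ⟨n, a, ha, hVa⟩ := hex
    exact ⟨fun m => {a} ∩ D m, fun m => ⟨(finite_singleton a).inter_of_left _, inter_subset_right⟩,
      fun K _ => ⟨n, a, ⟨rfl, ha⟩, hVa ▸ subset_univ K⟩⟩
  push Not at hex
  have hcover (n : ℕ) : V '' D n ∈ fCovers lam := by
    refine ⟨?_, forall_mem_image.mpr fun a _ => hV a, fun K hK => ?_⟩
    · rintro ⟨a, ha, hVa⟩
      exact hex n a ha hVa
    · exact exists_mem_image.mpr (hD n K hK)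
  obtain ⟨B, hB, -, -, hBmu⟩ := hS _ hcover
  choose F hFD hFfin hFB using fun n =>
    exists_subset_image_finite_and.mp ⟨B n, (hB n).2, (hB n).1, rfl⟩
  refine ⟨F, fun n => ⟨hFfin n, hFD n⟩, fun K hK => ?_⟩
  obtain ⟨U, hU, hKU⟩ := hBmu K hK
  obtain ⟨n, hn⟩ := mem_iUnion.mp hU
  obtain ⟨a, ha, rfl⟩ : U ∈ V '' F n := hFB n ▸ hn
  exact ⟨n, a, ha, hKU⟩

theorem exists_finite_approx [Nonempty X] (hlam : MemPsi lam)
    (hS : Sfin (fCovers lam) (fCovers mu)) {D : ℕ → Set C(X, ℝ)}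
    (hD : ∀ n, @Dense _ (setOpenTopology lam) (D n)) (g : C(X, ℝ)) {ε : ℝ} (hε : 0 < ε) :
    ∃ F : ℕ → Set C(X, ℝ), (∀ n, (F n).Finite ∧ F n ⊆ D n) ∧
      ∀ K ∈ mu, ∃ n, ∃ h ∈ F n, h ∈ uniformBall K g ε :=
  hS.exists_finite_selection (isCozero_setOf_dist_lt · g ε)
    fun n K hK => hlam.dense_iff.mp (hD n) g K hK ε hε

theorem mSepBi [Nonempty X] (hlam : MemPsi lam) (hmu : MemPsi mu)
    (hsep : @SeparableSpace C(X, ℝ) (setOpenTopology mu))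
    (hS : Sfin (fCovers lam) (fCovers mu)) :
    MSepBi (setOpenTopology lam) (setOpenTopology mu) := by
  intro D hD
  obtain ⟨s, hs⟩ := @exists_dense_seq C(X, ℝ) (setOpenTopology mu) _ _
  -- `σ (k, j, i)` is the `i`-th set reserved for approximating `s k` up to `1 / (j + 1)`.
  let σ : ℕ × ℕ × ℕ ≃ ℕ := Denumerable.eqv _
  choose F hF happrox using fun k j : ℕ => exists_finite_approx hlam hS
    (fun i => hD (σ (k, j, i))) (s k) (Nat.one_div_pos_of_nat (α := ℝ) (n := j))
  let G (p : ℕ × ℕ × ℕ) : Set C(X, ℝ) := F p.1 p.2.1 p.2.2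
  refine ⟨fun n => G (σ.symm n), fun n => ?_, hmu.dense_iff.mpr fun f K hK ε hε => ?_⟩
  · simpa only [Prod.mk.eta, σ.apply_symm_apply] using
      hF (σ.symm n).1 (σ.symm n).2.1 (σ.symm n).2.2
  · obtain ⟨_, ⟨k, rfl⟩, hk⟩ := hmu.dense_iff.mp hs f K hK (ε / 2) (half_pos hε)
    obtain ⟨j, hj⟩ := exists_nat_one_div_lt (half_pos hε)
    obtain ⟨i, h, hh, hhK⟩ := happrox k j K hK
    refine ⟨h, mem_iUnion.mpr ⟨σ (k, j, i), by simpa [G] using hh⟩, fun x hx => ?_⟩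
    calc dist (h x) (f x) ≤ dist (h x) (s k x) + dist (s k x) (f x) := dist_triangle _ _ _
      _ < ε / 2 + ε / 2 := add_lt_add ((hhK x hx).trans hj) (hk x hx)
      _ = ε := add_halves ε

end Sfin

theorem MSepBi.of_subsingleton {Y : Type*} [Subsingleton Y] (t₁ t₂ : TopologicalSpace Y) :
    MSepBi t₁ t₂ := by
  intro D hD
  refine ⟨D, fun n => ⟨toFinite _, subset_rfl⟩, fun y => @subset_closure _ t₂ _ _ ?_⟩
  obtain ⟨d, hd⟩ : (D 0).Nonempty := @Dense.nonempty _ t₁ _ ⟨y⟩ (hD 0)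
  exact mem_iUnion.mpr ⟨0, Subsingleton.elim d y ▸ hd⟩

theorem MemPsi.empty_mem_fCovers [IsEmpty X] (h : MemPsi lam) : ∅ ∈ fCovers lam :=
  ⟨notMem_empty _, fun _ hU => absurd hU (notMem_empty _),
    fun A hA => isEmptyElim (h.nonempty A hA).some⟩

theorem sfin_fCovers_iff_mSep_general (hlam : MemPsi lam) (hmu : MemPsi mu)
    (hsep : @SeparableSpace C(X, ℝ) (setOpenTopology mu)) :
    Sfin (fCovers lam) (fCovers mu) ↔
      MSepBi (setOpenTopology lam) (setOpenTopology mu) := by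
  cases isEmpty_or_nonempty X
  · exact iff_of_true (.of_empty_mem hmu.empty_mem_fCovers) (.of_subsingleton _ _)
  · exact ⟨Sfin.mSepBi hlam hmu hsep, MSepBi.sfin_fCovers hlam hmu⟩

end

/-- For a Tychonoff separably `λ`-submetrizable space `X` and `λ, μ ∈ Ψ` with
`μ ⊆ λ`: `X` has property `S_fin(Λ(λ), Λ(μ))` iff `(C(X), τ_μ, τ_λ)` is
`M_{(τ_λ,τ_μ)}`-separable. -/
theorem sfin_fCovers_iff_mSep
    {X : Type*} [TopologicalSpace X] [T35Space X]
    (lam mu : Set (Set X)) (hlam : MemPsi lam) (hmu : MemPsi mu) (hsub : mu ⊆ lam)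
    (hsm : SeparablyLamSubmetrizable X lam) :
    Sfin (fCovers lam) (fCovers mu) ↔
      MSepBi (setOpenTopology lam) (setOpenTopology mu) :=
  sfin_fCovers_iff_mSep_general hlam hmu (hmu.separableSpace (hsm.mono hsub))
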